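/- Let Ω ⋐ ℂⁿ be a bounded strongly m-pseudoconvex domain and u ∈ SH_m(Ω) ∩ L¹(Ω) with u ≤ 0 on Ω. For 0 < δ < δ₀ := diam(Ω), let u_δ(z) := ∫_Ω u(ζ) χ_δ(z−ζ) dλ_{2n}(ζ) be the δ-regularization of u by convolution with a smooth radial approximate identity χ_δ supported in the ball of radius δ. Then there exists a constant b_n > 0, independent of u and δ, such that ∫_{Ω_δ} (u_δ − u) dλ_{2n} ≤ b_n δ ‖u‖₁, where Ω_δ := {z ∈ Ω : dist(z,∂Ω) > δ}, λ_{2n} is Lebesgue measure, and ‖u‖₁ := ∫_Ω |u| dλ_{2n}. -/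

import Mathlib

/- Preliminary notions for the formalization of results from
"The Hölder continuous subsolution theorem for complex Hessian equations". -/

open MeasureTheory Metric Filter Topology Set
open scoped ENNReal NNReal

noncomputable section

/-- ℂⁿ with its Euclidean structure. -/
abbrev Cn (n : ℕ) : Type := EuclideanSpace ℂ (Fin n)

instance (n : ℕ) : MeasurableSpace (Cn n) := borel _
instance (n : ℕ) : BorelSpace (Cn n) := ⟨rfl⟩
/-- Lebesgue measure `λ_{2n}` on ℂⁿ. -/
instance (n : ℕ) : MeasureSpace (Cn n) :=
  ⟨Measure.map (⇑(EuclideanSpace.equiv (Fin n) ℂ).symm) volume⟩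

/-- Second derivative of `u` at `z` in the directions `v, w`. -/
def d2 {n : ℕ} (u : Cn n → ℝ) (z v w : Cn n) : ℝ :=
  iteratedFDeriv ℝ 2 u z ![v, w]

/-- The complex Hessian matrix `(∂²u/∂z_j ∂z̄_k)_{j,k}` of a real valued function. -/
def complexHessian {n : ℕ} (u : Cn n → ℝ) (z : Cn n) : Matrix (Fin n) (Fin n) ℂ :=
  fun j k =>
    (4 : ℂ)⁻¹ *
      (((d2 u z (EuclideanSpace.single j (1 : ℂ)) (EuclideanSpace.single k (1 : ℂ)) +
            d2 u z (EuclideanSpace.single j Complex.I)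
              (EuclideanSpace.single k Complex.I) : ℝ) : ℂ) +
        Complex.I *
          ((d2 u z (EuclideanSpace.single j (1 : ℂ)) (EuclideanSpace.single k Complex.I) -
              d2 u z (EuclideanSpace.single j Complex.I)
                (EuclideanSpace.single k (1 : ℂ)) : ℝ) : ℂ))

/-- The mixed discriminant of `n` complex `n×n` matrices (polarization formula for `det`).
For Hermitian matrices `A₁, …, Aₙ` representing constant `(1,1)`-forms `θ₁, …, θₙ`, it is the
density of `θ₁ ∧ ⋯ ∧ θₙ` with respect to `βⁿ` (normalized so that the identity gives `1`). -/
def mixedDet (n : ℕ) (A : Fin n → Matrix (Fin n) (Fin n) ℂ) : ℂ :=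
  (n.factorial : ℂ)⁻¹ *
    ∑ S : Finset (Fin n), (-1 : ℂ) ^ (n - S.card) * (∑ i ∈ S, A i).det

/-- Pad a `j`-tuple of matrices with copies of the identity (i.e. with copies of the
standard Kähler form `β`) to obtain an `n`-tuple. -/
def padded (n j : ℕ) (B : Fin j → Matrix (Fin n) (Fin n) ℂ) :
    Fin n → Matrix (Fin n) (Fin n) ℂ :=
  fun i => if h : (i : ℕ) < j then B ⟨i, h⟩ else 1

/-- Density of `θ₁ ∧ ⋯ ∧ θ_j ∧ β^{n-j}` with respect to `βⁿ`, where the `(1,1)`-forms `θ_i`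
are given by matrices `B i`. -/
def mixedHess (n j : ℕ) (B : Fin j → Matrix (Fin n) (Fin n) ℂ) : ℝ :=
  (mixedDet n (padded n j B)).re

/-- A Hermitian matrix `A` (i.e. a constant `(1,1)`-form `θ`) is `m`-positive if
`θ^k ∧ β^{n-k} ≥ 0` for `k = 1, …, m`. -/
def IsMPositiveMatrix (n m : ℕ) (A : Matrix (Fin n) (Fin n) ℂ) : Prop :=
  A.IsHermitian ∧ ∀ k, 1 ≤ k → k ≤ m → 0 ≤ mixedHess n k (fun _ => A)

/-- A test function on `Ω`: smooth with compact support contained in `Ω`. -/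
def IsTestFn (n : ℕ) (Ω : Set (Cn n)) (χ : Cn n → ℝ) : Prop :=
  ContDiff ℝ (⊤ : ℕ∞) χ ∧ HasCompactSupport χ ∧ tsupport χ ⊆ Ω

/-- `u` is `m`-subharmonic on `Ω` : it is upper semicontinuous, locally integrable, and
`dd^c u ∧ θ₁ ∧ ⋯ ∧ θ_{m-1} ∧ β^{n-m} ≥ 0` in the sense of currents on `Ω` for all
`m`-positive constant `(1,1)`-forms `θ₁, …, θ_{m-1}` (the case of all `θ_i = β`
gives distributional subharmonicity). -/
def IsMSubharmonicOn (n m : ℕ) (Ω : Set (Cn n)) (u : Cn n → ℝ) : Prop :=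
  UpperSemicontinuousOn u Ω ∧ LocallyIntegrableOn u Ω volume ∧
  ∀ θ : ℕ → Matrix (Fin n) (Fin n) ℂ, (∀ i, IsMPositiveMatrix n m (θ i)) →
    ∀ χ : Cn n → ℝ, IsTestFn n Ω χ → (∀ z, 0 ≤ χ z) →
      0 ≤ ∫ z in Ω, u z * mixedHess n m
        (fun i : Fin m => if (i : ℕ) = 0 then complexHessian χ z else θ (i : ℕ))

/-- A smooth nonnegative radial function supported in the unit ball with total integral `1`. -/
def IsMollifier (n : ℕ) (χ : Cn n → ℝ) : Prop :=
  ContDiff ℝ (⊤ : ℕ∞) χ ∧ (∀ z, 0 ≤ χ z) ∧ (∀ z w : Cn n, ‖z‖ = ‖w‖ → χ z = χ w) ∧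
  tsupport χ ⊆ closedBall 0 1 ∧ ∫ z, χ z = 1

/-- The rescaled mollifier `χ_δ(ζ) := δ^{-2n} χ(ζ/δ)`. -/
def scaledMollifier (n : ℕ) (χ : Cn n → ℝ) (δ : ℝ) (ζ : Cn n) : ℝ :=
  (δ ^ (2 * n))⁻¹ * χ (δ⁻¹ • ζ)

/-- The `δ`-regularization `u_δ(z) := ∫_Ω u(ζ) χ_δ(z - ζ) dλ_{2n}(ζ)`. -/
def regularize (n : ℕ) (Ω : Set (Cn n)) (χ : Cn n → ℝ) (u : Cn n → ℝ) (δ : ℝ)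
    (z : Cn n) : ℝ :=
  ∫ ζ in Ω, u ζ * scaledMollifier n χ δ (z - ζ)

/-- `μ` is the mixed Hessian measure `dd^c f₀ ∧ ⋯ ∧ dd^c f_{j-1} ∧ β^{n-j}` on `Ω`
(in the sense of Bedford–Taylor/Błocki): for every mollifier, the mixed Hessian densities of
the regularizations converge weakly to `μ` against test functions supported in `Ω`. -/
def IsMixedHessianMeasure (n : ℕ) (Ω : Set (Cn n)) (j : ℕ) (f : ℕ → Cn n → ℝ)
    (μ : Measure (Cn n)) : Prop :=
  ∀ χmol : Cn n → ℝ, IsMollifier n χmol →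
  ∀ χ : Cn n → ℝ, IsTestFn n Ω χ →
    Tendsto (fun δ : ℝ => ∫ z in Ω, χ z * mixedHess n j
        (fun i : Fin j => complexHessian (regularize n Ω χmol (f (i : ℕ)) δ) z))
      (𝓝[>] (0 : ℝ)) (𝓝 (∫ z, χ z ∂μ))

/-- `μ` is the `m`-Hessian measure `(dd^c u)^m ∧ β^{n-m}` of `u` on `Ω`. -/
def IsHessianMeasure (n m : ℕ) (Ω : Set (Cn n)) (u : Cn n → ℝ) (μ : Measure (Cn n)) :
    Prop :=
  IsMixedHessianMeasure n Ω m (fun _ => u) μ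

/-- The `m`-Hessian capacity
`Cap_m(K,Ω) = sup { ∫_K (dd^c u)^m ∧ β^{n-m} : u ∈ SH_m(Ω), -1 ≤ u ≤ 0 }`. -/
def capm (n m : ℕ) (Ω K : Set (Cn n)) : ℝ≥0∞ :=
  ⨆ (u : Cn n → ℝ)
    (_ : IsMSubharmonicOn n m Ω u ∧ ∀ z ∈ Ω, -1 ≤ u z ∧ u z ≤ 0)
    (μ : Measure (Cn n)) (_ : IsHessianMeasure n m Ω u μ), μ K

/-- `ρ` is a defining function exhibiting `Ω` as a bounded strongly `m`-pseudoconvex domain: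
`ρ` is smooth and strictly `m`-subharmonic on a neighborhood of `closure Ω`
(normalized so that `(dd^c ρ)^k ∧ β^{n-k} ≥ β^n` for `1 ≤ k ≤ m`), `Ω = {ρ < 0}`
near `closure Ω` and `∇ρ ≠ 0` on `∂Ω = {ρ = 0}`. -/
def IsSPCDefining (n m : ℕ) (Ω : Set (Cn n)) (ρ : Cn n → ℝ) : Prop :=
  IsOpen Ω ∧ Bornology.IsBounded Ω ∧ ContDiff ℝ (⊤ : ℕ∞) ρ ∧
  ∃ U : Set (Cn n), IsOpen U ∧ closure Ω ⊆ U ∧ Ω = {z ∈ U | ρ z < 0} ∧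
    (∀ z ∈ frontier Ω, ρ z = 0 ∧ fderiv ℝ ρ z ≠ 0) ∧
    ∀ z ∈ U, ∀ k, 1 ≤ k → k ≤ m →
      1 ≤ mixedHess n k (fun _ => complexHessian ρ z)

/-- `Ω ⋐ ℂⁿ` is a bounded strongly `m`-pseudoconvex domain. -/
def StronglyMPseudoconvex (n m : ℕ) (Ω : Set (Cn n)) : Prop :=
  ∃ ρ : Cn n → ℝ, IsSPCDefining n m Ω ρ

/-- `u` has boundary value `0` at every point of `∂Ω`. -/
def ZeroBoundaryValues {n : ℕ} (Ω : Set (Cn n)) (u : Cn n → ℝ) : Prop :=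
  ∀ ζ ∈ frontier Ω, Tendsto u (𝓝[Ω] ζ) (𝓝 (0 : ℝ))

/-- `φ ∈ 𝓔⁰_m(Ω)`: bounded, nonpositive, `m`-subharmonic with zero boundary values and
finite total Hessian mass. -/
def MemE0 (n m : ℕ) (Ω : Set (Cn n)) (φ : Cn n → ℝ) : Prop :=
  IsMSubharmonicOn n m Ω φ ∧ (∀ z ∈ Ω, φ z ≤ 0) ∧ (∃ M : ℝ, ∀ z ∈ Ω, -M ≤ φ z) ∧
  ZeroBoundaryValues Ω φ ∧
  ∃ μ : Measure (Cn n), IsHessianMeasure n m Ω φ μ ∧ μ Ω ≠ ⊤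

/-- `f` is Hölder continuous with exponent `α` and constant `κ` on `s`. -/
def HolderOn {n : ℕ} (κ α : ℝ) (f : Cn n → ℝ) (s : Set (Cn n)) : Prop :=
  ∀ z ∈ s, ∀ w ∈ s, |f z - f w| ≤ κ * dist z w ^ α

/-- The upper semicontinuous regularization of `f`. -/
def uscReg {n : ℕ} (f : Cn n → ℝ) (z : Cn n) : ℝ := Filter.limsup f (𝓝 z)

/-- The `m`-subharmonic envelope `P_{m,Ω}(h)`: the upper semicontinuous regularization
of the supremum of all `m`-subharmonic functions on `Ω` lying below `h`. -/
def envelope (n m : ℕ) (Ω : Set (Cn n)) (h : Cn n → ℝ) : Cn n → ℝ :=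
  uscReg (fun z => sSup {t : ℝ | ∃ v : Cn n → ℝ,
    IsMSubharmonicOn n m Ω v ∧ (∀ w ∈ Ω, v w ≤ h w) ∧ t = v z})

/-- The modulus of continuity of `f` on `s` at scale `δ`. -/
def modulusOfContinuity {n : ℕ} (f : Cn n → ℝ) (s : Set (Cn n)) (δ : ℝ) : ℝ :=
  sSup {t : ℝ | ∃ z ∈ s, ∃ w ∈ s, dist z w ≤ δ ∧ t = |f z - f w|}

/-- `g ∈ C^{1,1}(∂Ω)`: `g` extends to a `C^{1,1}` function near `∂Ω`. -/
def IsC11Boundary {n : ℕ} (Ω : Set (Cn n)) (g : Cn n → ℝ) : Prop :=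
  ∃ G : Cn n → ℝ, Set.EqOn G g (frontier Ω) ∧ ContDiff ℝ 1 G ∧
    ∃ L : NNReal, LipschitzWith L (fderiv ℝ G)

lemma fwd_poly (k : ℕ) (p : Polynomial ℂ) (hp : p.natDegree ≤ k) :
    ∑ j ∈ Finset.range (k + 1), (-1 : ℂ) ^ (k - j) * (k.choose j : ℂ) * p.eval (j : ℂ) =
      k.factorial * p.coeff k := by
  have h := fwdDiff_iter_eq_sum_shift (1 : ℂ) (fun x => p.eval x) k 0
  have h2 : (fun x => p.eval x) = ∑ i ∈ Finset.range (k+1), p.coeff i • (fun x : ℂ => x ^ i) := by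
    funext x
    rw [Polynomial.eval_eq_sum_range' (Nat.lt_succ_of_le hp)]
    simp
  have h3 : (fwdDiff (1 : ℂ))^[k] (fun x => p.eval x) 0 = k.factorial * p.coeff k := by
    rw [h2, fwdDiff_iter_finsetSum]
    rw [Finset.sum_range_succ, Finset.sum_eq_zero]
    · rw [fwdDiff_iter_const_smul, fwdDiff_iter_eq_factorial]
      simp [mul_comm]
    · intro i hi
      rw [fwdDiff_iter_const_smul, fwdDiff_iter_pow_eq_zero_of_lt (Finset.mem_range.1 hi)]
      simp
  rw [← h3, h]
  refine Finset.sum_congr rfl fun j _ => ?_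
  simp

lemma mixedDet_trace (k : ℕ) (A : Matrix (Fin (k+1)) (Fin (k+1)) ℂ) :
    mixedDet (k+1) (fun i => if (i : ℕ) = 0 then A else 1) = A.trace / ((k + 1 : ℕ) : ℂ) := by
  classical
  unfold mixedDet
  have hu : (Finset.univ : Finset (Finset (Fin (k+1)))) =
      (insert 0 (Finset.univ.erase (0 : Fin (k+1)))).powerset := by
    rw [Finset.insert_erase (Finset.mem_univ _), Finset.powerset_univ]
  have hcard : (Finset.univ.erase (0 : Fin (k+1))).card = k := by simp
  rw [hu, Finset.sum_powerset_insert (Finset.notMem_erase _ _)]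
  have hsum : ∀ S ∈ (Finset.univ.erase (0 : Fin (k+1))).powerset,
      (∑ i ∈ S, (fun i : Fin (k+1) => if (i : ℕ) = 0 then A else 1) i) =
        (S.card : ℂ) • (1 : Matrix (Fin (k+1)) (Fin (k+1)) ℂ) := by
    intro S hS
    rw [Finset.sum_congr rfl (g := fun _ => (1 : Matrix (Fin (k+1)) (Fin (k+1)) ℂ))]
    · simp [← Nat.cast_smul_eq_nsmul ℂ]
    · intro i hi
      have := Finset.mem_erase.1 (Finset.mem_powerset.1 hS hi)
      have h0 : (i : ℕ) ≠ 0 := fun h => this.1 (Fin.ext h)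
      simp [h0]
  set p : Polynomial ℂ := (-A).charpoly with hp
  set q : Polynomial ℂ := p - Polynomial.X ^ (k+1) with hq
  have hpm : p.Monic := Matrix.charpoly_monic _
  have hpd : p.natDegree = k + 1 := by simp [hp]
  have hqd : q.natDegree ≤ k := by
    rw [Polynomial.natDegree_le_iff_coeff_eq_zero]
    intro N hN
    rw [hq, Polynomial.coeff_sub, Polynomial.coeff_X_pow]
    rcases Nat.lt_or_ge (k+1) N with h | h
    · rw [Polynomial.coeff_eq_zero_of_natDegree_lt (by omega)]; simp; omega
    · have : N = k + 1 := by omega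
      subst this
      have := hpm.coeff_natDegree
      rw [hpd] at this
      simp [this]
  have hqc : q.coeff k = A.trace := by
    have h := Matrix.trace_eq_neg_charpoly_coeff (-A)
    simp only [Fintype.card_fin, Nat.add_sub_cancel, Matrix.trace_neg, neg_inj] at h
    rw [hq, Polynomial.coeff_sub, Polynomial.coeff_X_pow]
    simp [← hp] at h ⊢
    exact h.symm
  have hdet : ∀ x : ℂ, (A + x • (1 : Matrix (Fin (k+1)) (Fin (k+1)) ℂ)).det = p.eval x := by
    intro x
    rw [hp, Matrix.eval_charpoly, sub_neg_eq_add, add_comm A]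
    congr 2
    ext i j
    simp [Matrix.scalar_apply, Matrix.one_apply, Matrix.diagonal_apply]
  have e1 : ∑ S ∈ (Finset.univ.erase (0 : Fin (k+1))).powerset, (-1 : ℂ) ^ (k + 1 - S.card) *
      (∑ i ∈ S, (fun i : Fin (k+1) => if (i : ℕ) = 0 then A else 1) i).det =
      ∑ S ∈ (Finset.univ.erase (0 : Fin (k+1))).powerset,
        (fun c : ℕ => (-1 : ℂ) ^ (k + 1 - c) * (c : ℂ) ^ (k + 1)) S.card := by
    refine Finset.sum_congr rfl fun S hS => ?_
    rw [hsum S hS, Matrix.det_smul]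
    simp
  have e2 : ∑ S ∈ (Finset.univ.erase (0 : Fin (k+1))).powerset,
      (-1 : ℂ) ^ (k + 1 - (insert 0 S).card) *
      (∑ i ∈ insert 0 S, (fun i : Fin (k+1) => if (i : ℕ) = 0 then A else 1) i).det =
      ∑ S ∈ (Finset.univ.erase (0 : Fin (k+1))).powerset,
        (fun c : ℕ => (-1 : ℂ) ^ (k - c) * p.eval (c : ℂ)) S.card := by
    refine Finset.sum_congr rfl fun S hS => ?_
    have h0 : (0 : Fin (k+1)) ∉ S := fun h =>
      (Finset.mem_erase.1 (Finset.mem_powerset.1 hS h)).1 rfl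
    rw [Finset.sum_insert h0, hsum S hS, Finset.card_insert_of_notMem h0]
    simp [hdet]
  rw [e1, e2, Finset.sum_powerset_apply_card (fun c : ℕ => (-1 : ℂ) ^ (k + 1 - c) * (c : ℂ) ^ (k + 1)),
    Finset.sum_powerset_apply_card (fun c : ℕ => (-1 : ℂ) ^ (k - c) * p.eval (c : ℂ)), hcard,
    ← Finset.sum_add_distrib]
  have key := fwd_poly k q hqd
  rw [hqc] at key
  have e3 : ∀ c ∈ Finset.range (k+1),
      k.choose c • ((-1 : ℂ) ^ (k + 1 - c) * (c : ℂ) ^ (k + 1)) +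
        k.choose c • ((-1 : ℂ) ^ (k - c) * p.eval (c : ℂ)) =
      (-1 : ℂ) ^ (k - c) * (k.choose c : ℂ) * q.eval (c : ℂ) := by
    intro c hc
    have hc' : k + 1 - c = (k - c) + 1 := by have := Finset.mem_range.1 hc; omega
    rw [hc', hq]
    simp [pow_succ]
    ring
  rw [Finset.sum_congr rfl e3, key, Nat.factorial_succ]
  have hk : (k.factorial : ℂ) ≠ 0 := by exact_mod_cast k.factorial_ne_zero
  have hk1 : ((k : ℂ) + 1) ≠ 0 := by exact_mod_cast Nat.succ_ne_zero k
  push_cast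
  field_simp

lemma mixedHess_trace (n m : ℕ) (hm1 : 1 ≤ m) (hmn : m ≤ n) (A : Matrix (Fin n) (Fin n) ℂ) :
    mixedHess n m (fun i : Fin m => if (i : ℕ) = 0 then A else 1) = A.trace.re / n := by
  obtain ⟨k, rfl⟩ : ∃ k, n = k + 1 := ⟨n - 1, by omega⟩
  have : padded (k+1) m (fun i : Fin m => if (i : ℕ) = 0 then A else 1) =
      fun i : Fin (k+1) => if (i : ℕ) = 0 then A else 1 := by
    funext i
    unfold padded
    by_cases h : (i : ℕ) = 0
    · have : (i : ℕ) < m := by omega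
      simp [h]; intro; omega
    · simp [h]
  rw [mixedHess, this, mixedDet_trace, Complex.div_natCast_re]

lemma one_mpos (n m : ℕ) (hmn : m ≤ n) : IsMPositiveMatrix n m 1 := by
  refine ⟨Matrix.isHermitian_one, fun k hk1 hkm => ?_⟩
  have := mixedHess_trace n k hk1 (hkm.trans hmn) 1
  simp only [ite_self] at this
  rw [this]
  simp
  positivity

/-- Laplacian. -/
def Lap {n : ℕ} (f : Cn n → ℝ) (z : Cn n) : ℝ :=
  ∑ j : Fin n, (d2 f z (EuclideanSpace.single j (1 : ℂ)) (EuclideanSpace.single j (1 : ℂ)) +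
    d2 f z (EuclideanSpace.single j Complex.I) (EuclideanSpace.single j Complex.I))

lemma mixedHess_Lap (n m : ℕ) (hm1 : 1 ≤ m) (hmn : m ≤ n) (f : Cn n → ℝ) (z : Cn n) :
    mixedHess n m (fun i : Fin m => if (i : ℕ) = 0 then complexHessian f z else 1) =
      (4 * n : ℝ)⁻¹ * Lap f z := by
  rw [mixedHess_trace n m hm1 hmn, Matrix.trace, Complex.re_sum]
  have : ∀ j : Fin n, ((complexHessian f z).diag j).re =
    4⁻¹ * (d2 f z (EuclideanSpace.single j (1 : ℂ)) (EuclideanSpace.single j (1 : ℂ)) +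
    d2 f z (EuclideanSpace.single j Complex.I) (EuclideanSpace.single j Complex.I)) := by
    intro j
    have : (4 : ℂ)⁻¹ = ((4⁻¹ : ℝ) : ℂ) := by push_cast; rfl
    rw [Matrix.diag_apply, complexHessian, this, Complex.re_ofReal_mul]
    congr 1
    rw [Complex.add_re, Complex.ofReal_re, Complex.mul_re]
    simp
  simp_rw [this]
  rw [← Finset.mul_sum, Lap, mul_inv]
  ring

lemma msh_lap {n m : ℕ} (hm1 : 1 ≤ m) (hmn : m ≤ n) {Ω : Set (Cn n)} {u : Cn n → ℝ}
    (hu : IsMSubharmonicOn n m Ω u) {φ : Cn n → ℝ} (hφ : IsTestFn n Ω φ) (h0 : ∀ z, 0 ≤ φ z) :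
    0 ≤ ∫ z in Ω, u z * Lap φ z := by
  have h := hu.2.2 (fun _ => 1) (fun _ => one_mpos n m hmn) φ hφ h0
  simp_rw [mixedHess_Lap n m hm1 hmn] at h
  have e : (∫ z in Ω, u z * ((4 * n : ℝ)⁻¹ * Lap φ z)) =
      (4 * n : ℝ)⁻¹ * ∫ z in Ω, u z * Lap φ z := by
    rw [← integral_const_mul]
    congr 1; funext z; ring
  rw [e] at h
  have hn : (0 : ℝ) < n := by exact_mod_cast (by omega : 0 < n)
  exact nonneg_of_mul_nonneg_right h (by positivity)

instance instHaarCn (n : ℕ) : (volume : Measure (Cn n)).IsAddHaarMeasure :=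
  ContinuousLinearEquiv.isAddHaarMeasure_map (EuclideanSpace.equiv (Fin n) ℂ).symm volume

lemma two_le_top' : (1 : WithTop ℕ∞) + 1 ≤ ((⊤ : ℕ∞) : WithTop ℕ∞) := by
  have : ((1 + 1 : ℕ∞) : WithTop ℕ∞) ≤ ((⊤ : ℕ∞) : WithTop ℕ∞) := WithTop.coe_le_coe.2 le_top
  exact this

lemma finrank_Cn (n : ℕ) : Module.finrank ℝ (Cn n) = 2 * n := by
  rw [← Module.finrank_mul_finrank ℝ ℂ (Cn n)]
  simp

lemma d2_eq {n : ℕ} (f : Cn n → ℝ) (z v w : Cn n) :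
    d2 f z v w = fderiv ℝ (fderiv ℝ f) z v w := by
  rw [d2, iteratedFDeriv_two_apply]; rfl

lemma bdd_of_cs {n : ℕ} {F : Type} [NormedAddCommGroup F] {f : Cn n → F}
    (hf : Continuous f) (hc : HasCompactSupport f) : ∃ C, ∀ x, ‖f x‖ ≤ C := by
  exact hf.bounded_above_of_compact_support hc

/-- Weighted average of translates. -/
def avg {n : ℕ} {X : Type} [MeasurableSpace X] (μ : Measure X) (a : X → ℝ) (T : X → Cn n)
    {F : Type} [NormedAddCommGroup F] [NormedSpace ℝ F] (f : Cn n → F) (z : Cn n) : F :=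
  ∫ x, a x • f (z + T x) ∂μ

section
variable {n : ℕ} {X : Type} [MeasurableSpace X] {μ : Measure X} {a : X → ℝ}
  {T : X → Cn n} {F : Type} [NormedAddCommGroup F] [NormedSpace ℝ F] {f : Cn n → F}

lemma avg_integrable (ha : Integrable a μ) (hT : AEStronglyMeasurable T μ)
    (hf : Continuous f) (hc : HasCompactSupport f) (z : Cn n) :
    Integrable (fun x => a x • f (z + T x)) μ := by
  obtain ⟨C, hC⟩ := bdd_of_cs hf hc
  refine ha.smul_bdd C ?_ (Eventually.of_forall fun x => hC _)
  exact hf.comp_aestronglyMeasurable (aestronglyMeasurable_const.add hT)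

lemma avg_hasFDerivAt (ha : Integrable a μ) (hT : AEStronglyMeasurable T μ)
    (hf : ContDiff ℝ 1 f) (hc : HasCompactSupport f) (z : Cn n) :
    HasFDerivAt (avg μ a T f) (avg μ a T (fderiv ℝ f) z) z := by
  have hf' : Continuous (fderiv ℝ f) := hf.continuous_fderiv one_ne_zero
  have hc' := hc.fderiv (𝕜 := ℝ)
  obtain ⟨C, hC⟩ := bdd_of_cs hf' hc'
  refine hasFDerivAt_integral_of_dominated_of_fderiv_le (s := univ) (bound := fun x => ‖a x‖ * C)
    univ_mem (Eventually.of_forall fun y => ?_) ?_ ?_ ?_ ?_ ?_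
    (F' := fun y x => a x • fderiv ℝ f (y + T x))
  · exact (avg_integrable ha hT hf.continuous hc y).1
  · exact avg_integrable ha hT hf.continuous hc z
  · exact (avg_integrable ha hT hf' hc' z).1
  · refine Eventually.of_forall fun x y _ => ?_
    rw [norm_smul]
    gcongr
    exact hC _
  · exact ha.norm.mul_const C
  · refine Eventually.of_forall fun x y _ => ?_
    have h1 : HasFDerivAt f (fderiv ℝ f (y + T x)) (y + T x) :=
      (hf.differentiable one_ne_zero _).hasFDerivAt
    have h2 := (HasFDerivAt.comp y h1 ((hasFDerivAt_id y).add_const (T x))).const_smul (a x)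
    exact h2

lemma avg_fderiv (ha : Integrable a μ) (hT : AEStronglyMeasurable T μ)
    (hf : ContDiff ℝ 1 f) (hc : HasCompactSupport f) :
    fderiv ℝ (avg μ a T f) = avg μ a T (fderiv ℝ f) :=
  funext fun z => (avg_hasFDerivAt ha hT hf hc z).fderiv

lemma avg_apply {G : Type} [NormedAddCommGroup G] [NormedSpace ℝ G] [CompleteSpace F]
    {g : Cn n → G →L[ℝ] F} (ha : Integrable a μ) (hT : AEStronglyMeasurable T μ)
    (hf : Continuous g) (hc : HasCompactSupport g) (z : Cn n) (v : G) :
    avg μ a T g z v = avg μ a T (fun x => g x v) z := by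
  rw [avg, ContinuousLinearMap.integral_apply (avg_integrable ha hT hf hc z)]
  rfl

lemma avg_contDiff (ha : Integrable a μ) (hT : AEStronglyMeasurable T μ) (k : ℕ) :
    ∀ {F : Type} [NormedAddCommGroup F] [NormedSpace ℝ F] {f : Cn n → F},
    ContDiff ℝ (k + 1) f → HasCompactSupport f → ContDiff ℝ k (avg μ a T f) := by
  induction k with
  | zero =>
    intro F _ _ f hf hc
    simp only [Nat.cast_zero, zero_add] at hf ⊢
    rw [contDiff_zero]
    exact continuous_iff_continuousAt.2 fun z => (avg_hasFDerivAt ha hT hf hc z).continuousAt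
  | succ k ih =>
    intro F _ _ f hf hc
    have h1 : ContDiff ℝ 1 f := hf.of_le (by norm_cast; omega)
    have hd : fderiv ℝ (avg μ a T f) = avg μ a T (fderiv ℝ f) :=
      funext fun z => (avg_hasFDerivAt ha hT h1 hc z).fderiv
    push_cast
    rw [contDiff_succ_iff_fderiv]
    refine ⟨fun z => (avg_hasFDerivAt ha hT h1 hc z).differentiableAt, by simp, ?_⟩
    rw [hd]
    refine ih (ContDiff.fderiv_right hf ?_) (hc.fderiv (𝕜 := ℝ))
    norm_cast

lemma avg_smooth (ha : Integrable a μ) (hT : AEStronglyMeasurable T μ)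
    (hf : ContDiff ℝ (⊤ : ℕ∞) f) (hc : HasCompactSupport f) :
    ContDiff ℝ (⊤ : ℕ∞) (avg μ a T f) := by
  rw [contDiff_infty]
  intro k
  exact avg_contDiff ha hT k (hf.of_le (by exact_mod_cast le_top)) hc
end

lemma avg_d2 {n : ℕ} {X : Type} [MeasurableSpace X] {μ : Measure X} {a : X → ℝ}
    {T : X → Cn n} {f : Cn n → ℝ} (ha : Integrable a μ) (hT : AEStronglyMeasurable T μ)
    (hf : ContDiff ℝ (⊤ : ℕ∞) f) (hc : HasCompactSupport f) (z v w : Cn n) :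
    d2 (avg μ a T f) z v w = avg μ a T (fun x => d2 f x v w) z := by
  have h1 : ContDiff ℝ 1 f := hf.of_le (by exact_mod_cast le_top)
  have h2 : ContDiff ℝ 1 (fderiv ℝ f) := hf.fderiv_right two_le_top'
  have hc1 := hc.fderiv (𝕜 := ℝ)
  have h3 : Continuous (fderiv ℝ (fderiv ℝ f)) := h2.continuous_fderiv one_ne_zero
  have hc2 := hc1.fderiv (𝕜 := ℝ)
  have h4 : Continuous (fun x => fderiv ℝ (fderiv ℝ f) x v) := by fun_prop
  have hc4 : HasCompactSupport (fun x => fderiv ℝ (fderiv ℝ f) x v) :=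
    hc1.fderiv_apply (𝕜 := ℝ) v
  rw [d2_eq, avg_fderiv ha hT h1 hc, avg_fderiv ha hT h2 hc1, avg_apply ha hT h3 hc2,
    avg_apply ha hT h4 hc4]
  simp_rw [d2_eq]

lemma d2_cont {n : ℕ} {f : Cn n → ℝ} (hf : ContDiff ℝ (⊤ : ℕ∞) f) (v w : Cn n) :
    Continuous (fun x => d2 f x v w) := by
  have h2 : ContDiff ℝ 1 (fderiv ℝ f) := hf.fderiv_right two_le_top'
  have h3 : Continuous (fderiv ℝ (fderiv ℝ f)) := h2.continuous_fderiv one_ne_zero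
  simp_rw [d2_eq]
  fun_prop

lemma d2_cs {n : ℕ} {f : Cn n → ℝ} (hc : HasCompactSupport f) (v w : Cn n) :
    HasCompactSupport (fun x => d2 f x v w) := by
  have hc2 := (hc.fderiv (𝕜 := ℝ)).fderiv (𝕜 := ℝ)
  have h := hc2.comp_left (g := fun B : Cn n →L[ℝ] Cn n →L[ℝ] ℝ => B v w) (by simp)
  convert h using 1
  funext z
  simp [d2_eq]

lemma avg_Lap {n : ℕ} {X : Type} [MeasurableSpace X] {μ : Measure X} {a : X → ℝ}
    {T : X → Cn n} {f : Cn n → ℝ} (ha : Integrable a μ) (hT : AEStronglyMeasurable T μ)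
    (hf : ContDiff ℝ (⊤ : ℕ∞) f) (hc : HasCompactSupport f) (z : Cn n) :
    Lap (avg μ a T f) z = avg μ a T (Lap f) z := by
  have h_integrable := fun v w => avg_integrable ha hT (d2_cont hf v w) (d2_cs hc v w) z
  simp only [Lap, avg_d2 ha hT hf hc]
  simp only [avg, Finset.smul_sum, smul_add, Lap]
  rw [integral_finsetSum]
  · refine Finset.sum_congr rfl fun j _ => ?_
    rw [integral_add (h_integrable _ _) (h_integrable _ _)]
  · intro j _
    exact (h_integrable _ _).add (h_integrable _ _)

lemma Lap_continuous {n : ℕ} {f : Cn n → ℝ} (hf : ContDiff ℝ (⊤ : ℕ∞) f) :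
    Continuous (Lap f) := by
  have h2 : ContDiff ℝ 1 (fderiv ℝ f) := hf.fderiv_right two_le_top'
  have h3 : Continuous (fderiv ℝ (fderiv ℝ f)) := h2.continuous_fderiv one_ne_zero
  unfold Lap
  simp_rw [d2_eq]
  fun_prop

lemma Lap_cs {n : ℕ} {f : Cn n → ℝ} (hc : HasCompactSupport f) :
    HasCompactSupport (Lap f) := by
  have hc2 := (hc.fderiv (𝕜 := ℝ)).fderiv (𝕜 := ℝ)
  have h := hc2.comp_left (g := fun B : Cn n →L[ℝ] Cn n →L[ℝ] ℝ => ∑ j : Fin n,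
    (B (EuclideanSpace.single j (1 : ℂ)) (EuclideanSpace.single j (1 : ℂ)) +
    B (EuclideanSpace.single j Complex.I) (EuclideanSpace.single j Complex.I))) (by simp)
  convert h using 1
  funext z
  simp [Lap, d2_eq]

lemma exists_eta {n : ℕ} (hn : 0 < n) {χ : Cn n → ℝ} (hχ : IsMollifier n χ) :
    ∃ η : Cn n → ℝ, Differentiable ℝ η ∧ (∀ y, 0 ≤ η y) ∧ HasCompactSupport η ∧
      (∀ y (j : Fin n), fderiv ℝ η y (EuclideanSpace.single j (1 : ℂ)) = -(χ y * (y j).re)) ∧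
      (∀ y (j : Fin n), fderiv ℝ η y (EuclideanSpace.single j Complex.I) = -(χ y * (y j).im)) := by
  obtain ⟨hs, h0, hrad, hsupp, h_integrable⟩ := hχ
  let e : Cn n := EuclideanSpace.single ⟨0, hn⟩ (1 : ℂ)
  have hen : ‖e‖ = 1 := by simp [e]
  let k : ℝ → ℝ := fun s => χ (Real.sqrt s • e)
  have hk : Continuous k := by
    have := hs.continuous
    fun_prop
  have hk0 : ∀ s, 1 < s → k s = 0 := by
    intro s hs
    refine image_eq_zero_of_notMem_tsupport (f := χ) ?_
    intro h
    have := hsupp h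
    rw [mem_closedBall, dist_zero_right, norm_smul, hen, mul_one, Real.norm_eq_abs,
      abs_of_nonneg (Real.sqrt_nonneg _), Real.sqrt_le_iff] at this
    linarith [this.2]
  have hkn : ∀ y : Cn n, k (‖y‖ ^ 2) = χ y := by
    intro y
    apply hrad
    rw [norm_smul, hen, Real.sqrt_sq (norm_nonneg _)]
    simp
  let H : ℝ → ℝ := fun q => 2⁻¹ * ∫ s in q..1, k s
  have hH : ∀ q, HasDerivAt H (-(2⁻¹ * k q)) q := by
    intro q
    have := (intervalIntegral.integral_hasDerivAt_left (hk.intervalIntegrable q 1)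
      hk.stronglyMeasurable.stronglyMeasurableAtFilter hk.continuousAt).const_mul (2⁻¹ : ℝ)
    simpa using this
  have hH1 : ∀ q, 1 ≤ q → H q = 0 := by
    intro q hq
    simp only [H]
    rw [intervalIntegral.integral_symm, intervalIntegral.integral_of_le hq,
      setIntegral_congr_fun (g := fun _ => (0 : ℝ)) measurableSet_Ioc]
    · simp
    · intro s hs; exact hk0 s hs.1
  have hHn : ∀ q, 0 ≤ H q := by
    intro q
    rcases le_total q 1 with hq | hq
    · exact mul_nonneg (by norm_num) (intervalIntegral.integral_nonneg hq fun s _ => h0 _)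
    · exact (hH1 q hq).ge
  let Q : Cn n → ℝ := fun y => ∑ j : Fin n, ((y j).re ^ 2 + (y j).im ^ 2)
  have hQ : ∀ y, Q y = ‖y‖ ^ 2 := by
    intro y
    rw [EuclideanSpace.norm_sq_eq]
    refine Finset.sum_congr rfl fun j _ => ?_
    rw [Complex.sq_norm, Complex.normSq_apply]; ring
  let P : Fin n → Cn n →L[ℝ] ℂ := fun j => (EuclideanSpace.proj (𝕜 := ℂ) j).restrictScalars ℝ
  let Re' : Fin n → Cn n →L[ℝ] ℝ := fun j => Complex.reCLM.comp (P j)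
  let Im' : Fin n → Cn n →L[ℝ] ℝ := fun j => Complex.imCLM.comp (P j)
  have hQd : ∀ y, HasFDerivAt Q (∑ j : Fin n, ((2 * (y j).re) • Re' j + (2 * (y j).im) • Im' j)) y := by
    intro y
    refine HasFDerivAt.fun_sum fun j _ => ?_
    have h1 := ((Re' j).hasFDerivAt (x := y)).pow 2
    have h2 := ((Im' j).hasFDerivAt (x := y)).pow 2
    refine (h1.fun_add h2).congr_fderiv ?_
    have a1 : (Re' j) y = (y j).re := rfl
    have a2 : (Im' j) y = (y j).im := rfl
    rw [a1, a2]
    norm_num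
  have hηd : ∀ y, HasFDerivAt (fun y => H (Q y))
      ((-(2⁻¹ * k (Q y))) • (∑ j : Fin n, ((2 * (y j).re) • Re' j + (2 * (y j).im) • Im' j))) y :=
    fun y => (hH (Q y)).comp_hasFDerivAt y (hQd y)
  refine ⟨fun y => H (Q y), fun y => (hηd y).differentiableAt, fun y => hHn _, ?_, ?_, ?_⟩
  · refine HasCompactSupport.intro (isCompact_closedBall (0 : Cn n) 1) fun y hy => hH1 _ ?_
    rw [hQ]
    have : 1 < ‖y‖ := by simpa using hy
    nlinarith
  · intro y j
    rw [(hηd y).fderiv, hQ, hkn]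
    simp only [smul_apply, sum_apply, add_apply]
    rw [Finset.sum_eq_single j]
    · simp [Re', Im', P]; ring
    · intro i _ hij; simp [Re', Im', P, hij]
    · simp
  · intro y j
    rw [(hηd y).fderiv, hQ, hkn]
    simp only [smul_apply, sum_apply, add_apply]
    rw [Finset.sum_eq_single j]
    · simp [Re', Im', P]; ring
    · intro i _ hij; simp [Re', Im', P, hij]
    · simp

lemma ibp_eta {n : ℕ} {η f : Cn n → ℝ} (hη : Differentiable ℝ η) (hηc : HasCompactSupport η)
    (hf : ContDiff ℝ (⊤ : ℕ∞) f) (v : Cn n) (hv : Continuous fun y => fderiv ℝ η y v)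
    (z : Cn n) (t : ℝ) :
    ∫ y, fderiv ℝ η y v * fderiv ℝ f (z + t • y) v =
      -(t * ∫ y, η y * d2 f (z + t • y) v v) := by
  have h2 : ContDiff ℝ 1 (fderiv ℝ f) := hf.fderiv_right two_le_top'
  have hg : ∀ y, HasFDerivAt (fun y => fderiv ℝ f (z + t • y) v)
      (t • (fderiv ℝ (fderiv ℝ f) (z + t • y)).flip v) y := by
    intro y
    have h1 : HasFDerivAt (fun x => fderiv ℝ f x v)
        ((fderiv ℝ (fderiv ℝ f) (z + t • y)).flip v) (z + t • y) := by
      have := (h2.differentiable one_ne_zero (z + t • y)).hasFDerivAt.clm_apply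
        (hasFDerivAt_const v (z + t • y))
      simpa using this
    have h3 : HasFDerivAt (fun y : Cn n => z + t • y) (t • ContinuousLinearMap.id ℝ (Cn n)) y :=
      ((hasFDerivAt_id y).const_smul t).const_add z
    have h4 := HasFDerivAt.comp y h1 h3
    refine h4.congr_fderiv ?_
    ext w
    simp
  have hgd : ∀ y, fderiv ℝ (fun y => fderiv ℝ f (z + t • y) v) y v = t * d2 f (z + t • y) v v := by
    intro y
    rw [(hg y).fderiv, d2_eq]
    simp
  have hc1 : Continuous (fun y => fderiv ℝ f (z + t • y) v) :=
    continuous_iff_continuousAt.2 fun y => (hg y).continuousAt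
  have hc2 : Continuous (fun y => d2 f (z + t • y) v v) :=
    (d2_cont hf v v).comp (by fun_prop)
  have I1 : Integrable (fun y => fderiv ℝ η y v * fderiv ℝ f (z + t • y) v) := by
    refine (hv.mul hc1).integrable_of_hasCompactSupport ?_
    exact HasCompactSupport.mul_right (hηc.fderiv_apply (𝕜 := ℝ) v)
  have I2 : Integrable (fun y => η y * fderiv ℝ (fun y => fderiv ℝ f (z + t • y) v) y v) := by
    simp_rw [hgd]
    refine (hη.continuous.mul (continuous_const.mul hc2)).integrable_of_hasCompactSupport ?_
    exact HasCompactSupport.mul_right hηc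
  have I3 : Integrable (fun y => η y * fderiv ℝ f (z + t • y) v) := by
    refine (hη.continuous.mul hc1).integrable_of_hasCompactSupport ?_
    exact HasCompactSupport.mul_right hηc
  have key := integral_mul_fderiv_eq_neg_fderiv_mul_of_integrable I1 I2 I3
    (fun x _ => hη x) (fun x _ => (hg x).differentiableAt)
  simp_rw [hgd] at key
  rw [← integral_const_mul]
  have : ∀ y, t * (η y * d2 f (z + t • y) v v) = η y * (t * d2 f (z + t • y) v v) := by
    intro y; ring
  simp_rw [this]
  rw [key, neg_neg]

lemma cn_decomp {n : ℕ} (y : Cn n) :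
    y = ∑ j : Fin n, ((y j).re • EuclideanSpace.single j (1 : ℂ) +
      (y j).im • EuclideanSpace.single j Complex.I) := by
  ext i
  simp only [WithLp.ofLp_sum, WithLp.ofLp_add, WithLp.ofLp_smul, Finset.sum_apply, Pi.add_apply,
    Pi.smul_apply]
  rw [Finset.sum_eq_single i]
  · simp
  · intro j _ hj
    simp [hj.symm]
  · simp

lemma mollifier_cs {n : ℕ} {χ : Cn n → ℝ} (hχ : IsMollifier n χ) : HasCompactSupport χ :=
  (isCompact_closedBall (0 : Cn n) 1).of_isClosed_subset (isClosed_tsupport _) hχ.2.2.2.1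

lemma deriv_F {n : ℕ} {χ η f : Cn n → ℝ} (hχ : IsMollifier n χ)
    (hη : Differentiable ℝ η) (hηc : HasCompactSupport η)
    (h1 : ∀ y (j : Fin n), fderiv ℝ η y (EuclideanSpace.single j (1 : ℂ)) = -(χ y * (y j).re))
    (h2 : ∀ y (j : Fin n), fderiv ℝ η y (EuclideanSpace.single j Complex.I) = -(χ y * (y j).im))
    (hf : ContDiff ℝ (⊤ : ℕ∞) f) (hc : HasCompactSupport f) (z : Cn n) (t : ℝ) :
    HasDerivAt (fun t : ℝ => ∫ y, χ y * f (z + t • y))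
      (t * ∫ y, η y * Lap f (z + t • y)) t := by
  have hχc := hχ.1.continuous
  have hχs := mollifier_cs hχ
  have hf1 : ContDiff ℝ 1 f := hf.of_le (by exact_mod_cast le_top)
  have hf' : Continuous (fderiv ℝ f) := hf1.continuous_fderiv one_ne_zero
  have hfc := hf.continuous
  obtain ⟨C, hC⟩ := bdd_of_cs hf' (hc.fderiv (𝕜 := ℝ))
  have hcre : ∀ j : Fin n, Continuous fun y : Cn n => (y j).re := by intro j; fun_prop
  have hcim : ∀ j : Fin n, Continuous fun y : Cn n => (y j).im := by intro j; fun_prop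
  have hD := hasDerivAt_integral_of_dominated_loc_of_deriv_le (μ := (volume : Measure (Cn n)))
    (F := fun (t : ℝ) y => χ y * f (z + t • y)) (x₀ := t) (s := univ)
    (F' := fun (t : ℝ) y => χ y * fderiv ℝ f (z + t • y) y)
    (bound := fun y => ‖χ y‖ * (C * ‖y‖)) univ_mem ?_ ?_ ?_ ?_ ?_ ?_
  · refine hD.2.congr_deriv ?_
    have hv1 : ∀ j, Continuous fun y => fderiv ℝ η y (EuclideanSpace.single j (1 : ℂ)) := by
      intro j; simp_rw [h1]; exact (hχc.mul (hcre j)).neg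
    have hv2 : ∀ j, Continuous fun y => fderiv ℝ η y (EuclideanSpace.single j Complex.I) := by
      intro j; simp_rw [h2]; exact (hχc.mul (hcim j)).neg
    have E : ∀ y, χ y * fderiv ℝ f (z + t • y) y = ∑ j : Fin n,
        (-(fderiv ℝ η y (EuclideanSpace.single j (1 : ℂ)) *
            fderiv ℝ f (z + t • y) (EuclideanSpace.single j (1 : ℂ))) +
          -(fderiv ℝ η y (EuclideanSpace.single j Complex.I) *
            fderiv ℝ f (z + t • y) (EuclideanSpace.single j Complex.I))) := by
      intro y
      have hL : ∀ L : Cn n →L[ℝ] ℝ, L y = ∑ j : Fin n,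
          ((y j).re * L (EuclideanSpace.single j (1 : ℂ)) +
            (y j).im * L (EuclideanSpace.single j Complex.I)) := by
        intro L
        conv_lhs => rw [cn_decomp y]
        simp
      rw [hL, Finset.mul_sum]
      refine Finset.sum_congr rfl fun j _ => ?_
      rw [h1, h2]
      ring
    have J : ∀ v, Continuous (fun y => fderiv ℝ η y v) →
        Integrable fun y => -(fderiv ℝ η y v * fderiv ℝ f (z + t • y) v) := by
      intro v hv
      refine Integrable.neg ?_
      refine Continuous.integrable_of_hasCompactSupport (by fun_prop) ?_
      exact HasCompactSupport.mul_right (hηc.fderiv_apply (𝕜 := ℝ) v)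
    have K : ∀ v, Integrable fun y => η y * d2 f (z + t • y) v v := by
      intro v
      have := hη.continuous
      have hc2 : Continuous (fun y => d2 f (z + t • y) v v) :=
        (d2_cont hf v v).comp (by fun_prop)
      exact (this.mul hc2).integrable_of_hasCompactSupport (HasCompactSupport.mul_right hηc)
    simp_rw [E]
    rw [integral_finsetSum]; swap
    · exact fun j _ => (J _ (hv1 j)).add (J _ (hv2 j))
    simp only [Lap, Finset.mul_sum, mul_add]
    rw [integral_finsetSum]; swap
    · exact fun j _ => (K _).add (K _)
    rw [Finset.mul_sum]
    refine Finset.sum_congr rfl fun j _ => ?_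
    rw [integral_add (J _ (hv1 j)) (J _ (hv2 j)), integral_add (K _) (K _), integral_neg,
      integral_neg, ibp_eta hη hηc hf _ (hv1 j), ibp_eta hη hηc hf _ (hv2 j)]
    ring
  · refine Eventually.of_forall fun s => ?_
    exact Continuous.aestronglyMeasurable (by fun_prop)
  · exact Continuous.integrable_of_hasCompactSupport (by fun_prop) (HasCompactSupport.mul_right hχs)
  · exact Continuous.aestronglyMeasurable (by fun_prop)
  · refine Eventually.of_forall fun y s _ => ?_
    rw [norm_mul]
    gcongr
    exact (ContinuousLinearMap.le_opNorm _ _).trans (by gcongr; exact hC _)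
  · refine Continuous.integrable_of_hasCompactSupport (by fun_prop) ?_
    exact HasCompactSupport.mul_right hχs.norm
  · refine Eventually.of_forall fun y s _ => ?_
    have a1 : HasDerivAt (fun s : ℝ => z + s • y) y s := by
      simpa using ((hasDerivAt_id s).smul_const y).const_add z
    have a2 := ((hf1.differentiable one_ne_zero (z + s • y)).hasFDerivAt.comp_hasDerivAt s a1)
    exact a2.const_mul (χ y)

lemma exists_Psi {n : ℕ} (hn : 0 < n) {χ : Cn n → ℝ} (hχ : IsMollifier n χ) :
    ∃ M : ℝ, 0 < M ∧ ∀ δ : ℝ, 0 < δ → ∀ f : Cn n → ℝ, ContDiff ℝ (⊤ : ℕ∞) f →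
      HasCompactSupport f → (∀ z, 0 ≤ f z) → (∀ z, f z ≤ 1) →
      ∃ Ψ : Cn n → ℝ, ContDiff ℝ (⊤ : ℕ∞) Ψ ∧ (∀ z, 0 ≤ Ψ z) ∧ (∀ z, Ψ z ≤ M * δ ^ 2) ∧
        ∀ z, Lap Ψ z = (∫ y, χ y * f (z + δ • y)) - f z := by
  obtain ⟨η, hη, hη0, hηc, h1, h2⟩ := exists_eta hn hχ
  have hηi : Integrable η := hη.continuous.integrable_of_hasCompactSupport hηc
  have hI0 : 0 ≤ ∫ y, η y := integral_nonneg hη0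
  refine ⟨(∫ y, η y) + 1, by linarith, fun δ hδ f hf hc hf0 hf1 => ?_⟩
  let μ : Measure (ℝ × Cn n) := (volume.restrict (Ioc 0 δ)).prod volume
  let a : ℝ × Cn n → ℝ := fun p => p.1 * η p.2
  let T : ℝ × Cn n → Cn n := fun p => p.1 • p.2
  have hid : Integrable (fun t : ℝ => t) (volume.restrict (Ioc 0 δ)) :=
    (continuous_id.integrableOn_Icc (a := (0 : ℝ)) (b := δ)).mono_set Ioc_subset_Icc_self
  have ha : Integrable a μ := hid.mul_prod hηi
  have hT : AEStronglyMeasurable T μ := by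
    apply Continuous.aestronglyMeasurable
    fun_prop
  have hpos : ∀ᵐ p ∂μ, 0 < p.1 := by
    have hb : ∀ᵐ t ∂(volume.restrict (Ioc (0 : ℝ) δ)), 0 < t :=
      (ae_restrict_mem measurableSet_Ioc).mono fun t ht => ht.1
    exact Measure.quasiMeasurePreserving_fst.ae hb
  have ha0 : ∀ᵐ p ∂μ, 0 ≤ a p := hpos.mono fun p hp => mul_nonneg hp.le (hη0 _)
  refine ⟨avg μ a T f, avg_smooth ha hT hf hc, fun z => ?_, fun z => ?_, fun z => ?_⟩
  · exact integral_nonneg_of_ae (ha0.mono fun p hp => mul_nonneg hp (hf0 _))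
  · have e1 : avg μ a T f z ≤ ∫ p, a p ∂μ := by
      refine integral_mono_ae (avg_integrable ha hT hf.continuous hc z) ha (ha0.mono fun p hp => ?_)
      exact mul_le_of_le_one_right hp (hf1 _)
    have e2 : ∫ p, a p ∂μ = (∫ t in Ioc 0 δ, t) * ∫ y, η y :=
      integral_prod_mul (fun t : ℝ => t) η
    have e3 : ∫ t in Ioc 0 δ, t = δ ^ 2 / 2 := by
      rw [← intervalIntegral.integral_of_le hδ.le, integral_id]; ring
    rw [e2, e3] at e1
    nlinarith [sq_nonneg δ, mul_nonneg (sq_nonneg δ) hI0]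
  · have hLi := avg_integrable ha hT (Lap_continuous hf) (Lap_cs hc) z
    rw [avg_Lap ha hT hf hc z, avg, integral_prod _ hLi]
    have e : ∀ t : ℝ, (∫ y, a (t, y) • Lap f (z + T (t, y))) =
        t * ∫ y, η y * Lap f (z + t • y) := by
      intro t
      rw [← integral_const_mul]
      congr 1; funext y
      simp only [a, T, smul_eq_mul]; ring
    have h_integrable := hLi.integral_prod_left
    simp_rw [e] at h_integrable ⊢
    rw [← intervalIntegral.integral_of_le hδ.le,
      intervalIntegral.integral_eq_sub_of_hasDerivAt
        (fun t _ => deriv_F hχ hη hηc h1 h2 hf hc z t)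
        ((intervalIntegrable_iff_integrableOn_Ioc_of_le hδ.le).2 h_integrable)]
    congr 1
    simp only [zero_smul, add_zero]
    rw [integral_mul_const, hχ.2.2.2.2, one_mul]

lemma mem_of_lt_infDist {n : ℕ} {Ω : Set (Cn n)} {z x : Cn n} (hz : z ∈ Ω)
    (hx : dist x z < infDist z (frontier Ω)) : x ∈ Ω := by
  by_contra hxn
  have hpc : IsPreconnected (ball z (infDist z (frontier Ω))) :=
    (convex_ball z _).isPreconnected
  have h0 : 0 < infDist z (frontier Ω) := dist_nonneg.trans_lt hx
  have hnf : ∀ w ∈ ball z (infDist z (frontier Ω)), w ∉ frontier Ω := by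
    intro w hw hwf
    have := infDist_le_dist_of_mem (x := z) hwf
    rw [mem_ball, dist_comm] at hw
    linarith
  have hzb := mem_ball_self (x := z) h0
  obtain ⟨w, -, hw1, hw2⟩ := hpc (interior Ω) (closure Ω)ᶜ isOpen_interior
    isClosed_closure.isOpen_compl (fun w hw => by
      by_cases h1 : w ∈ interior Ω
      · exact Or.inl h1
      · exact Or.inr fun h2 => hnf w hw ⟨h2, h1⟩)
    ⟨z, hzb, by
      by_contra h1
      exact hnf z hzb ⟨subset_closure hz, h1⟩⟩
    ⟨x, hx, fun h2 => hnf x hx ⟨h2, fun h1 => hxn (interior_subset h1)⟩⟩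
  exact hw2 (subset_closure (interior_subset hw1))

lemma exists_c {n m : ℕ} {Ω : Set (Cn n)} {ρ : Cn n → ℝ} (h : IsSPCDefining n m Ω ρ) :
    ∃ c : ℝ, 0 < c ∧ ∀ z ∈ Ω, c * infDist z (frontier Ω) ≤ -ρ z := by
  obtain ⟨hO, hB, hρ, U, hU, hcl, hΩ, hfr, -⟩ := h
  have hneg : ∀ z ∈ Ω, ρ z < 0 := by intro z hz; rw [hΩ] at hz; exact hz.2
  have hK : IsCompact (closure Ω) := hB.isCompact_closure
  have key : ∃ c : ℝ, 0 < c ∧ ∀ z ∈ closure Ω, z ∈ Ω → c * infDist z (frontier Ω) ≤ -ρ z := by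
    refine hK.induction_on (p := fun s => ∃ c : ℝ, 0 < c ∧ ∀ z ∈ s, z ∈ Ω →
      c * infDist z (frontier Ω) ≤ -ρ z) ⟨1, one_pos, by simp⟩ ?_ ?_ ?_
    · rintro s t hst ⟨c, hc, h⟩
      exact ⟨c, hc, fun z hz => h z (hst hz)⟩
    · rintro s t ⟨c, hc, h⟩ ⟨c', hc', h'⟩
      refine ⟨min c c', lt_min hc hc', fun z hz hzΩ => ?_⟩
      have hd : 0 ≤ infDist z (frontier Ω) := infDist_nonneg
      rcases hz with hz | hz
      · exact (mul_le_mul_of_nonneg_right (min_le_left _ _) hd).trans (h z hz hzΩ)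
      · exact (mul_le_mul_of_nonneg_right (min_le_right _ _) hd).trans (h' z hz hzΩ)
    · intro z0 hz0
      by_cases hzΩ : z0 ∈ Ω
      · have hr := hneg z0 hzΩ
        have hd0 : 0 ≤ infDist z0 (frontier Ω) := infDist_nonneg
        let c := (-ρ z0) / 2 / (infDist z0 (frontier Ω) + 1)
        have hc : 0 < c := by simp only [c]; apply div_pos <;> linarith
        have e1 : ∀ᶠ z in 𝓝 z0, infDist z (frontier Ω) < infDist z0 (frontier Ω) + 1 :=
          (continuous_infDist_pt _).continuousAt.eventually_lt continuousAt_const (by simp)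
        have e2 : ∀ᶠ z in 𝓝 z0, (-ρ z0) / 2 < -ρ z :=
          continuousAt_const.eventually_lt hρ.continuous.neg.continuousAt
            (by show -ρ z0 / 2 < -ρ z0; linarith)
        refine ⟨_, mem_nhdsWithin_of_mem_nhds (e1.and e2), c, hc, ?_⟩
        rintro z ⟨h1, h2⟩ -
        have : c * infDist z (frontier Ω) ≤ c * (infDist z0 (frontier Ω) + 1) := by gcongr
        have e3 : c * (infDist z0 (frontier Ω) + 1) = -ρ z0 / 2 := by
          simp only [c]; rw [div_mul_cancel₀]; linarith
        linarith
      · have hz0f : z0 ∈ frontier Ω := ⟨hz0, by rwa [hO.interior_eq]⟩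
        obtain ⟨-, hne⟩ := hfr z0 hz0f
        set L := fderiv ℝ ρ z0 with hL
        obtain ⟨v, hv⟩ : ∃ v, 0 < L v := by
          by_contra! hcon
          apply hne
          ext v
          have a1 := hcon v
          have a2 := hcon (-v)
          rw [map_neg] at a2
          simp; linarith
        have hvn : 0 < ‖v‖ := by
          rw [norm_pos_iff]; rintro rfl; simp at hv
        have hst : HasStrictFDerivAt ρ L z0 :=
          hρ.contDiffAt.hasStrictFDerivAt (by simp)
        have hε : 0 < L v / (2 * ‖v‖) := by positivity
        have hev := hst.isLittleO.bound hε
        rw [nhds_prod_eq] at hev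
        obtain ⟨r, hr, hball⟩ := Metric.eventually_nhds_iff.1 (by rwa [← nhds_prod_eq] at hev)
        refine ⟨ball z0 (r / 2), mem_nhdsWithin_of_mem_nhds (ball_mem_nhds _ (by linarith)),
          L v / (4 * ‖v‖), by positivity, fun z hz hzΩ' => ?_⟩
        set d := infDist z (frontier Ω) with hd
        have hd0 : 0 ≤ d := infDist_nonneg
        have hdz : d ≤ dist z z0 := infDist_le_dist_of_mem hz0f
        rcases hd0.eq_or_lt with h0 | h0
        · rw [← h0, mul_zero]; linarith [hneg z hzΩ']
        set s := d / (2 * ‖v‖) with hs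
        have hs0 : 0 < s := by positivity
        have hsv : ‖s • v‖ = d / 2 := by
          rw [norm_smul, Real.norm_of_nonneg hs0.le, hs]; field_simp
        have hx : z + s • v ∈ Ω := by
          apply mem_of_lt_infDist hzΩ'
          rw [dist_eq_norm, add_sub_cancel_left, hsv]; linarith
        rw [mem_ball] at hz
        have hxz : dist (z + s • v) z0 < r := by
          have : dist (z + s • v) z0 ≤ dist (z + s • v) z + dist z z0 := dist_triangle _ _ _
          have h5 : dist (z + s • v) z = d / 2 := by
            rw [dist_eq_norm, add_sub_cancel_left, hsv]
          linarith
        have hb := @hball (z + s • v, z) (by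
          rw [Prod.dist_eq]; exact max_lt hxz (by linarith))
        simp only [add_sub_cancel_left, hsv] at hb
        have hb2 := neg_le_of_abs_le (by simpa [Real.norm_eq_abs] using hb)
        have h7 := hneg _ hx
        have h8 : L (s • v) = d * L v / (2 * ‖v‖) := by
          rw [map_smul, smul_eq_mul, hs]; ring
        have h9 : L v / (4 * ‖v‖) * d = d * L v / (2 * ‖v‖) - L v / (2 * ‖v‖) * (d / 2) := by
          field_simp; ring
        rw [h9]
        rw [← h8]
        simp only [map_smul, smul_eq_mul] at *
        linarith
  obtain ⟨c, hc, h⟩ := key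
  exact ⟨c, hc, fun z hz => h z (subset_closure hz) hz⟩

lemma exists_cut (ε : ℝ) (hε : 0 < ε) : ∃ h θ : ℝ → ℝ, ContDiff ℝ (⊤ : ℕ∞) h ∧ (∀ s, 0 ≤ h s) ∧
    (∀ s, s ≤ ε → h s = 0) ∧ (∀ s, HasDerivAt h (θ s) s) ∧ ContDiff ℝ (⊤ : ℕ∞) θ ∧
    (∀ s, 0 ≤ θ s) ∧ (∀ s, θ s ≤ 1) ∧ (∀ s, 2 * ε ≤ s → θ s = 1) ∧ ∀ s, 0 ≤ deriv θ s := by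
  let θ : ℝ → ℝ := fun x => Real.smoothTransition (x / ε - 1)
  have hθ : ContDiff ℝ (⊤ : ℕ∞) θ :=
    Real.smoothTransition.contDiff.comp ((contDiff_id.div_const ε).sub contDiff_const)
  let h : ℝ → ℝ := fun s => ∫ x in (ε)..s, θ x
  have hd : ∀ s, HasDerivAt h (θ s) s := fun s =>
    intervalIntegral.integral_hasDerivAt_right (hθ.continuous.intervalIntegrable _ _)
      hθ.continuous.stronglyMeasurable.stronglyMeasurableAtFilter hθ.continuous.continuousAt
  have hder : deriv h = θ := funext fun s => (hd s).deriv
  have hz : ∀ s, s ≤ ε → h s = 0 := by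
    intro s hs
    apply intervalIntegral.integral_zero_ae
    refine Eventually.of_forall fun x hx => ?_
    rw [uIoc_of_ge hs] at hx
    apply Real.smoothTransition.zero_of_nonpos
    have : x / ε ≤ 1 := (div_le_one hε).2 hx.2
    linarith
  have h0 : ∀ s, 0 ≤ θ s := fun s => Real.smoothTransition.nonneg _
  refine ⟨h, θ, ?_, ?_, hz, hd, hθ, h0, fun s => Real.smoothTransition.le_one _,
    ?_, ?_⟩
  · rw [contDiff_infty_iff_deriv, hder]
    exact ⟨fun s => (hd s).differentiableAt, hθ⟩
  · intro s
    rcases le_total s ε with hs | hs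
    · exact (hz s hs).ge
    · exact intervalIntegral.integral_nonneg hs fun x _ => h0 x
  · intro s hs
    apply Real.smoothTransition.one_of_one_le
    have : 2 ≤ s / ε := (le_div_iff₀ hε).2 hs
    linarith
  · intro s
    apply Monotone.deriv_nonneg
    intro x y hxy
    apply Real.smoothTransition.monotone
    gcongr

lemma Lap_comp {n : ℕ} {h θ : ℝ → ℝ} {w : Cn n → ℝ} (hd : ∀ s, HasDerivAt h (θ s) s)
    (hθ : ContDiff ℝ (⊤ : ℕ∞) θ) (hθ' : ∀ s, 0 ≤ deriv θ s)
    (hw : ContDiff ℝ (⊤ : ℕ∞) w) (z : Cn n) :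
    θ (w z) * Lap w z ≤ Lap (fun z => h (w z)) z := by
  have hwd : Differentiable ℝ w := hw.differentiable (by simp)
  have e1 : fderiv ℝ (fun z => h (w z)) = fun z => θ (w z) • fderiv ℝ w z := by
    funext z
    exact ((hd (w z)).comp_hasFDerivAt z (hwd z).hasFDerivAt).fderiv
  have h2 : ContDiff ℝ 1 (fderiv ℝ w) := hw.fderiv_right two_le_top'
  have hθd : HasFDerivAt (fun z => θ (w z)) (deriv θ (w z) • fderiv ℝ w z) z :=
    ((hθ.differentiable (by simp) (w z)).hasDerivAt).comp_hasFDerivAt z (hwd z).hasFDerivAt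
  have e2 : HasFDerivAt (fun z => θ (w z) • fderiv ℝ w z) _ z :=
    hθd.smul ((h2.differentiable (by simp)) z).hasFDerivAt
  have key : ∀ v, θ (w z) * d2 w z v v ≤ d2 (fun z => h (w z)) z v v := by
    intro v
    rw [d2_eq, d2_eq, e1, e2.fderiv]
    simp only [ContinuousLinearMap.add_apply, ContinuousLinearMap.smul_apply,
      ContinuousLinearMap.smulRight_apply, smul_eq_mul]
    have := mul_nonneg (hθ' (w z)) (mul_self_nonneg (fderiv ℝ w z v))
    nlinarith
  unfold Lap
  rw [Finset.mul_sum]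
  apply Finset.sum_le_sum
  intro j _
  rw [mul_add]
  exact add_le_add (key _) (key _)

lemma Lap_congr {n : ℕ} {f g : Cn n → ℝ} {z : Cn n} (h : f =ᶠ[𝓝 z] g) : Lap f z = Lap g z := by
  have h2 := (h.fderiv (𝕜 := ℝ)).fderiv_eq (𝕜 := ℝ)
  unfold Lap
  simp only [d2_eq, h2]

lemma Lap_lin {n : ℕ} {f g : Cn n → ℝ} (a : ℝ) (hf : ContDiff ℝ (⊤ : ℕ∞) f)
    (hg : ContDiff ℝ (⊤ : ℕ∞) g) (z : Cn n) :
    Lap (fun z => a * f z - g z) z = a * Lap f z - Lap g z := by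
  have hfd : Differentiable ℝ f := hf.differentiable (by simp)
  have hgd : Differentiable ℝ g := hg.differentiable (by simp)
  have h2f : Differentiable ℝ (fderiv ℝ f) :=
    (hf.fderiv_right two_le_top').differentiable one_ne_zero
  have h2g : Differentiable ℝ (fderiv ℝ g) :=
    (hg.fderiv_right two_le_top').differentiable one_ne_zero
  have e1 : fderiv ℝ (fun z => a * f z - g z) = fun z => a • fderiv ℝ f z - fderiv ℝ g z := by
    funext z
    exact (((hfd z).hasFDerivAt.const_mul a).sub (hgd z).hasFDerivAt).fderiv
  have e2 := (((h2f z).hasFDerivAt.const_smul a).sub (h2g z).hasFDerivAt).fderiv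
  have e3 : fderiv ℝ (fun z => a • fderiv ℝ f z - fderiv ℝ g z) z =
    a • fderiv ℝ (fderiv ℝ f) z - fderiv ℝ (fderiv ℝ g) z := e2
  unfold Lap
  simp only [d2_eq, e1, e3]
  rw [Finset.mul_sum, ← Finset.sum_sub_distrib]
  refine Finset.sum_congr rfl fun j _ => ?_
  simp only [ContinuousLinearMap.sub_apply, ContinuousLinearMap.smul_apply, smul_eq_mul]
  ring

lemma testFn_ind {n : ℕ} {Ω K : Set (Cn n)} {g : Cn n → ℝ} (hO : IsOpen Ω) (hK : IsCompact K)
    (hKΩ : K ⊆ Ω) (hg : ContDiff ℝ (⊤ : ℕ∞) g) (h0 : ∀ z ∈ Ω, z ∉ K → g z = 0) :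
    IsTestFn n Ω (indicator Ω g) := by
  have hz : ∀ z, z ∉ K → indicator Ω g z = 0 := by
    intro z hz
    by_cases h : z ∈ Ω
    · rw [indicator_of_mem h, h0 z h hz]
    · exact indicator_of_notMem h _
  have hs : tsupport (indicator Ω g) ⊆ K := by
    apply closure_minimal _ hK.isClosed
    intro z hz'
    by_contra h
    exact hz' (hz z h)
  refine ⟨contDiff_iff_contDiffAt.2 fun z => ?_, hK.of_isClosed_subset (isClosed_tsupport _) hs,
    hs.trans hKΩ⟩
  by_cases h : z ∈ Ω
  · refine hg.contDiffAt.congr_of_eventuallyEq ?_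
    filter_upwards [hO.mem_nhds h] with x hx
    exact indicator_of_mem hx _
  · refine (contDiffAt_const (c := (0 : ℝ))).congr_of_eventuallyEq ?_
    filter_upwards [hK.isClosed.isOpen_compl.mem_nhds (fun hk => h (hKΩ hk))] with x hx
    exact hz x hx

lemma int_mul_cont {n : ℕ} {Ω : Set (Cn n)} (hO : IsOpen Ω) (hB : Bornology.IsBounded Ω)
    {u g : Cn n → ℝ} (hu : IntegrableOn u Ω) (hg : Continuous g) :
    IntegrableOn (fun z => u z * g z) Ω := by
  obtain ⟨C, hC⟩ := hB.isCompact_closure.exists_bound_of_continuousOn hg.continuousOn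
  refine Integrable.mul_bdd (c := C) hu hg.aestronglyMeasurable ?_
  filter_upwards [ae_restrict_mem hO.measurableSet] with z hz
  exact hC z (subset_closure hz)

lemma key_ineq (n m : ℕ) (hm1 : 1 ≤ m) (hmn : m ≤ n) (Ω : Set (Cn n))
    (hΩ : StronglyMPseudoconvex n m Ω)
    (χ : Cn n → ℝ) (hχ : IsMollifier n χ) :
    ∃ b : ℝ, 0 < b ∧
      ∀ u : Cn n → ℝ, IsMSubharmonicOn n m Ω u → MeasureTheory.IntegrableOn u Ω →
        (∀ z ∈ Ω, u z ≤ 0) →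
        ∀ δ : ℝ, 0 < δ → ∀ f : Cn n → ℝ, ContDiff ℝ (⊤ : ℕ∞) f →
          HasCompactSupport f → (∀ z, 0 ≤ f z) → (∀ z, f z ≤ 1) →
          (∀ z, z ∉ {z ∈ Ω | δ < Metric.infDist z (frontier Ω)} → f z = 0) →
          (∫ z in Ω, u z * ((∫ y, χ y * f (z + δ • y)) - f z)) ≤ b * δ * ∫ z in Ω, |u z| := by
  obtain ⟨ρ, hρ⟩ := hΩ
  obtain ⟨c, hc, hcρ⟩ := exists_c hρ
  obtain ⟨hO, hB, hρs, U, hU, hcl, hΩU, hfr, -⟩ := hρ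
  obtain ⟨M, hM, hΨ⟩ := exists_Psi (by omega : 0 < n) hχ
  obtain ⟨B, hBB⟩ := hB.isCompact_closure.exists_bound_of_continuousOn
    (Lap_continuous hρs).continuousOn
  have hneg : ∀ z ∈ Ω, ρ z < 0 := by intro z hz; rw [hΩU] at hz; exact hz.2
  have hC : 0 < 2 * M / c := by positivity
  refine ⟨2 * M / c * (|B| + 1), by positivity, fun u hu hui hu0 δ hδ f hf hfc hf0 hf1 hfs => ?_⟩
  obtain ⟨Ψ, hΨs, hΨ0, hΨM, hΨL⟩ := hΨ δ hδ f hf hfc hf0 hf1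
  obtain ⟨h, θ, hh, hh0, hhz, hd, hθ, hθ0, hθ1, hθe, hθd⟩ := exists_cut (M * δ ^ 2 / 2) (by positivity)
  set C := 2 * M / c with hCdef
  let w : Cn n → ℝ := fun z => -(C * δ) * ρ z - Ψ z
  have hw : ContDiff ℝ (⊤ : ℕ∞) w := (contDiff_const.mul hρs).sub hΨs
  have hLw : ∀ z, Lap w z = -(C * δ) * Lap ρ z - Lap Ψ z := Lap_lin _ hρs hΨs
  have hg : ContDiff ℝ (⊤ : ℕ∞) (fun z => h (w z)) := hh.comp hw
  have hCδ : 0 < C * δ := by positivity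
  let K : Set (Cn n) := closure Ω ∩ {z | M * δ ^ 2 / 2 ≤ -(C * δ) * ρ z}
  have hK : IsCompact K := hB.isCompact_closure.inter_right
    (isClosed_le continuous_const (continuous_const.mul hρs.continuous))
  have hKΩ : K ⊆ Ω := by
    rintro z ⟨hz1, hz2⟩
    by_contra hz
    have := (hfr z ⟨hz1, by rwa [hO.interior_eq]⟩).1
    simp only [mem_ofPred_eq, this, mul_zero] at hz2
    have : 0 < M * δ ^ 2 / 2 := by positivity
    linarith
  have hT : IsTestFn n Ω (indicator Ω fun z => h (w z)) := by
    refine testFn_ind hO hK hKΩ hg fun z hz hzK => hhz _ ?_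
    have : ¬ (M * δ ^ 2 / 2 ≤ -(C * δ) * ρ z) := fun hh => hzK ⟨subset_closure hz, hh⟩
    have := hΨ0 z
    simp only [w]; linarith
  have h0 := msh_lap hm1 hmn hu hT (fun z => indicator_nonneg (fun z _ => hh0 _) z)
  have i1 := int_mul_cont hO hB hui (Lap_continuous hT.1)
  have i2 := int_mul_cont hO hB hui (Lap_continuous hΨs)
  have i3 : IntegrableOn (fun z => C * δ * (|B| + 1) * |u z|) Ω := hui.abs.const_mul _
  have hle : ∫ z in Ω, u z * Lap (indicator Ω fun z => h (w z)) z ≤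
      ∫ z in Ω, (C * δ * (|B| + 1) * |u z| - u z * Lap Ψ z) := by
    refine setIntegral_mono_on i1 (i3.sub i2) hO.measurableSet fun z hz => ?_
    have e : Lap (indicator Ω fun z => h (w z)) z = Lap (fun z => h (w z)) z := by
      apply Lap_congr
      filter_upwards [hO.mem_nhds hz] with x hx
      exact indicator_of_mem hx _
    have l1 := Lap_comp hd hθ hθd hw z
    have hu' := hu0 z hz
    have l2 : u z * Lap (fun z => h (w z)) z ≤ u z * (θ (w z) * Lap w z) :=
      mul_le_mul_of_nonpos_left l1 hu'
    have l3 : u z * Lap Ψ z ≤ u z * (θ (w z) * Lap Ψ z) := by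
      by_cases hzδ : z ∈ {z ∈ Ω | δ < Metric.infDist z (frontier Ω)}
      · have : θ (w z) = 1 := by
          apply hθe
          have a1 := hcρ z hz
          have a2 : c * δ ≤ -ρ z := (mul_le_mul_of_nonneg_left hzδ.2.le hc.le).trans a1
          have a3 : C * δ * (c * δ) ≤ C * δ * (-ρ z) := mul_le_mul_of_nonneg_left a2 hCδ.le
          have a4 : C * δ * (c * δ) = 2 * M * δ ^ 2 := by rw [hCdef]; field_simp
          have a5 := hΨM z
          simp only [w]; linarith
        rw [this, one_mul]
      · apply mul_le_mul_of_nonpos_left _ hu'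
        have : 0 ≤ Lap Ψ z := by
          rw [hΨL, hfs z hzδ, sub_zero]
          exact integral_nonneg fun y => mul_nonneg (hχ.2.1 y) (hf0 _)
        exact mul_le_of_le_one_left this (hθ1 _)
    have hb := hBB z (subset_closure hz)
    have l4 : -(u z * (θ (w z) * Lap ρ z)) ≤ (|B| + 1) * |u z| := by
      refine (neg_le_abs _).trans ?_
      rw [abs_mul, abs_mul, mul_comm]
      gcongr
      rw [abs_of_nonneg (hθ0 _)]
      rw [Real.norm_eq_abs] at hb
      have := mul_le_of_le_one_left (abs_nonneg (Lap ρ z)) (hθ1 (w z))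
      have := le_abs_self B
      linarith
    have l5 := mul_le_mul_of_nonneg_left l4 hCδ.le
    rw [e]
    rw [hLw] at l2
    nlinarith
  rw [integral_sub i3 i2, integral_const_mul] at hle
  simp only [← hΨL]
  have : C * (|B| + 1) * δ = C * δ * (|B| + 1) := by ring
  rw [this]
  linarith

lemma scaled_integrable {n : ℕ} {χ : Cn n → ℝ} (hχ : IsMollifier n χ) {δ : ℝ} (hδ : 0 < δ) :
    Integrable (scaledMollifier n χ δ) := by
  have h1 : Integrable χ := hχ.1.continuous.integrable_of_hasCompactSupport (mollifier_cs hχ)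
  exact (h1.comp_smul (inv_ne_zero hδ.ne')).const_mul _

lemma conv_integrable {n : ℕ} {Ω : Set (Cn n)} {χ u : Cn n → ℝ} (hχ : IsMollifier n χ) {δ : ℝ}
    (hδ : 0 < δ) (hu : IntegrableOn u Ω) :
    Integrable (fun p : Cn n × Cn n => u p.2 * scaledMollifier n χ δ (p.1 - p.2))
      ((volume : Measure (Cn n)).prod (volume.restrict Ω)) :=
  Integrable.convolution_integrand (ContinuousLinearMap.mul ℝ ℝ) hu (scaled_integrable hχ hδ)

lemma reg_integrable {n : ℕ} {Ω : Set (Cn n)} {χ u : Cn n → ℝ} (hχ : IsMollifier n χ) {δ : ℝ}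
    (hδ : 0 < δ) (hu : IntegrableOn u Ω) : Integrable (regularize n Ω χ u δ) :=
  (conv_integrable hχ hδ hu).integral_prod_left

lemma reg_fubini {n : ℕ} {Ω : Set (Cn n)} {χ u f : Cn n → ℝ} (hχ : IsMollifier n χ) {δ : ℝ}
    (hδ : 0 < δ) (hu : IntegrableOn u Ω) (hf : Continuous f) (hf0 : ∀ z, 0 ≤ f z)
    (hf1 : ∀ z, f z ≤ 1) :
    ∫ z, f z * regularize n Ω χ u δ z = ∫ z in Ω, u z * ∫ y, χ y * f (z + δ • y) := by
  have hi : Integrable (fun p : Cn n × Cn n => f p.1 *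
      (u p.2 * scaledMollifier n χ δ (p.1 - p.2)))
      ((volume : Measure (Cn n)).prod (volume.restrict Ω)) := by
    refine (conv_integrable hχ hδ hu).bdd_mul (c := 1) (by fun_prop) ?_
    refine Eventually.of_forall fun p => ?_
    rw [Real.norm_of_nonneg (hf0 _)]; exact hf1 _
  have e1 : ∫ z, f z * regularize n Ω χ u δ z =
      ∫ z, ∫ ζ in Ω, f z * (u ζ * scaledMollifier n χ δ (z - ζ)) := by
    refine integral_congr_ae (Eventually.of_forall fun z => ?_)
    simp only [regularize]
    rw [← integral_const_mul]
  rw [e1, integral_integral_swap hi]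
  refine integral_congr_ae (Eventually.of_forall fun ζ => ?_)
  simp only
  have e2 : ∀ z, f z * (u ζ * scaledMollifier n χ δ (z - ζ)) =
      u ζ * (f z * scaledMollifier n χ δ (z - ζ)) := fun z => by ring
  simp only [e2]
  rw [integral_const_mul]
  congr 1
  rw [← integral_add_right_eq_self _ ζ]
  have e3 : ∀ x : Cn n, f (x + ζ) * scaledMollifier n χ δ (x + ζ - ζ) =
      (δ ^ (2 * n))⁻¹ * (fun y => χ y * f (ζ + δ • y)) (δ⁻¹ • x) := by
    intro x
    simp only [scaledMollifier, add_sub_cancel_right, smul_smul, mul_inv_cancel₀ hδ.ne', one_smul]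
    rw [add_comm x ζ]; ring
  rw [integral_congr_ae (Eventually.of_forall e3), integral_const_mul,
    Measure.integral_comp_inv_smul_of_nonneg volume (fun y => χ y * f (ζ + δ • y)) hδ.le, finrank_Cn, smul_eq_mul, ← mul_assoc, inv_mul_cancel₀ (by positivity), one_mul]

lemma exists_seq {n : ℕ} {V : Set (Cn n)} (hV : IsOpen V) (hB : Bornology.IsBounded V) :
    ∃ f : ℕ → Cn n → ℝ, (∀ k, ContDiff ℝ (⊤ : ℕ∞) (f k)) ∧ (∀ k, HasCompactSupport (f k)) ∧
      (∀ k z, 0 ≤ f k z) ∧ (∀ k z, f k z ≤ 1) ∧ (∀ k z, z ∉ V → f k z = 0) ∧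
      ∀ z ∈ V, Tendsto (fun k => f k z) atTop (𝓝 1) := by
  obtain ⟨g, hgs, hg, hgr⟩ := hV.exists_contDiff_support_eq (n := ⊤)
  have hg0 : ∀ z, 0 ≤ g z := fun z => (hgr ⟨z, rfl⟩).1
  have hz : ∀ (k : ℕ) z, z ∉ V → Real.smoothTransition (k * g z) = 0 := by
    intro k z hz
    have : g z = 0 := by rw [← hgs] at hz; simpa using hz
    rw [this, mul_zero]; exact Real.smoothTransition.zero
  refine ⟨fun k z => Real.smoothTransition (k * g z),
    fun k => Real.smoothTransition.contDiff.comp (contDiff_const.mul hg), fun k => ?_,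
    fun k z => Real.smoothTransition.nonneg _, fun k z => Real.smoothTransition.le_one _,
    hz, fun z hzV => ?_⟩
  · exact HasCompactSupport.intro hB.isCompact_closure fun z hzc =>
      hz k z fun h => hzc (subset_closure h)
  · have hp : 0 < g z := by
      refine lt_of_le_of_ne (hg0 z) (Ne.symm ?_)
      rw [← hgs] at hzV; exact hzV
    obtain ⟨N, hN⟩ := exists_nat_ge (1 / g z)
    refine tendsto_const_nhds.congr' ?_
    filter_upwards [eventually_ge_atTop N] with k hk
    symm
    apply Real.smoothTransition.one_of_one_le
    rw [div_le_iff₀ hp] at hN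
    refine hN.trans ?_
    gcongr

lemma main_thm (n m : ℕ) (hm1 : 1 ≤ m) (hmn : m ≤ n) (Ω : Set (Cn n))
    (hΩ : StronglyMPseudoconvex n m Ω)
    (χ : Cn n → ℝ) (hχ : IsMollifier n χ) :
    ∃ b : ℝ, 0 < b ∧
      ∀ u : Cn n → ℝ, IsMSubharmonicOn n m Ω u → MeasureTheory.IntegrableOn u Ω →
        (∀ z ∈ Ω, u z ≤ 0) →
        ∀ δ : ℝ, 0 < δ → δ < Metric.diam Ω →
          (∫ z in {z ∈ Ω | δ < Metric.infDist z (frontier Ω)},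
              (regularize n Ω χ u δ z - u z)) ≤
            b * δ * ∫ z in Ω, |u z| := by
  obtain ⟨b, hb, key⟩ := key_ineq n m hm1 hmn Ω hΩ χ hχ
  refine ⟨b, hb, fun u hu hui hu0 δ hδ _ => ?_⟩
  obtain ⟨ρ, hρ⟩ := hΩ
  have hO := hρ.1
  have hB := hρ.2.1
  set V := {z ∈ Ω | δ < Metric.infDist z (frontier Ω)} with hVdef
  have hVΩ : V ⊆ Ω := fun z hz => hz.1
  have hV : IsOpen V := hO.inter (isOpen_lt continuous_const (continuous_infDist_pt _))
  obtain ⟨f, hfs, hfc, hf0, hf1, hfV, hft⟩ := exists_seq hV (hB.subset hVΩ)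
  have hri := reg_integrable hχ hδ hui
  have hdi : IntegrableOn (fun z => regularize n Ω χ u δ z - u z) V :=
    hri.integrableOn.sub (hui.mono_set hVΩ)
  have hle : ∀ k, ∫ z in V, f k z * (regularize n Ω χ u δ z - u z) ≤
      b * δ * ∫ z in Ω, |u z| := by
    intro k
    refine le_trans (le_of_eq ?_) (key u hu hui hu0 δ hδ (f k) (hfs k) (hfc k) (hf0 k) (hf1 k) (hfV k))
    have hbd : ∀ᵐ z ∂(volume : Measure (Cn n)), ‖f k z‖ ≤ 1 := Eventually.of_forall fun z => by
      rw [Real.norm_of_nonneg (hf0 _ _)]; exact hf1 _ _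
    have hfm : AEStronglyMeasurable (f k) (volume : Measure (Cn n)) :=
      (hfs k).continuous.aestronglyMeasurable
    have j1 : Integrable (fun z => f k z * regularize n Ω χ u δ z) := hri.bdd_mul (c := 1) hfm hbd
    have j2 : IntegrableOn (fun z => u z * f k z) Ω := int_mul_cont hO hB hui (hfs k).continuous
    have hg : Continuous fun z => ∫ y, χ y * f k (z + δ • y) := by
      have h1 : Integrable χ := hχ.1.continuous.integrable_of_hasCompactSupport (mollifier_cs hχ)
      exact (avg_smooth (T := fun y : Cn n => δ • y) h1 (by fun_prop) (hfs k) (hfc k)).continuous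
    have j3 : IntegrableOn (fun z => u z * ∫ y, χ y * f k (z + δ • y)) Ω :=
      int_mul_cont hO hB hui hg
    have j4 : Integrable (fun z => f k z * u z) (volume.restrict V) := by
      have h5 := j2.mono_set hVΩ
      simp only [mul_comm (u _)] at h5
      exact h5
    simp only [mul_sub]
    rw [integral_sub j3 j2, ← reg_fubini hχ hδ hui (hfs k).continuous (hf0 k) (hf1 k),
      integral_sub j1.integrableOn j4]
    congr 1
    · apply setIntegral_eq_integral_of_forall_compl_eq_zero
      intro z hz
      rw [hfV k z hz, zero_mul]
    · simp only [mul_comm (f k _)]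
      symm
      refine setIntegral_eq_of_subset_of_forall_sdiff_eq_zero hO.measurableSet hVΩ fun z hz => ?_
      rw [hfV k z hz.2, mul_zero]
  refine le_of_tendsto' (x := atTop) ?_ hle
  refine tendsto_integral_of_dominated_convergence
    (fun z => ‖regularize n Ω χ u δ z - u z‖) (fun k => ?_) hdi.norm (fun k => ?_) ?_
  · exact (hfs k).continuous.aestronglyMeasurable.mul hdi.aestronglyMeasurable
  · refine Eventually.of_forall fun z => ?_
    rw [norm_mul, Real.norm_of_nonneg (hf0 _ _)]
    exact mul_le_of_le_one_left (norm_nonneg _) (hf1 _ _)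
  · filter_upwards [ae_restrict_mem hV.measurableSet] with z hz
    simpa using (hft z hz).mul_const (regularize n Ω χ u δ z - u z)

/-- **Lemma 2.2 (3).** Let `Ω ⋐ ℂⁿ` be a bounded strongly `m`-pseudoconvex domain and
`u ∈ SH_m(Ω) ∩ L¹(Ω)` with `u ≤ 0`. There is a constant `b_n > 0`, independent of `u` and
`δ`, such that for `0 < δ < δ₀ := diam Ω`,
`∫_{Ω_δ} (u_δ - u) dλ_{2n} ≤ b_n δ ‖u‖₁`. -/
theorem statement3 (n m : ℕ) (hm1 : 1 ≤ m) (hmn : m ≤ n) (Ω : Set (Cn n))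
    (hΩ : StronglyMPseudoconvex n m Ω)
    (χ : Cn n → ℝ) (hχ : IsMollifier n χ) :
    ∃ b : ℝ, 0 < b ∧
      ∀ u : Cn n → ℝ, IsMSubharmonicOn n m Ω u → MeasureTheory.IntegrableOn u Ω →
        (∀ z ∈ Ω, u z ≤ 0) →
        ∀ δ : ℝ, 0 < δ → δ < Metric.diam Ω →
          (∫ z in {z ∈ Ω | δ < Metric.infDist z (frontier Ω)},
              (regularize n Ω χ u δ z - u z)) ≤
            b * δ * ∫ z in Ω, |u z| := by
  exact main_thm n m hm1 hmn Ω hΩ χ hχ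
end
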